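/- arXiv:2006.10624 — 2 statements merged into one kernel-verified Lean document; each statement's English description precedes it below -/
import Mathlib

section
/- Let V be a measurable space, π a finite nonnegative measure on V, κ a bounded measurable kernel from V to itself with ‖κ_V‖_∞ := sup_x κ(x,V) < ∞, θ(dx dy) := π(dx)κ(x,dy), and assume detailed balance (θ symmetric under the swap (x,y) ↦ (y,x)). Let G: V×V×ℝ×ℝ → ℝ be jointly measurable, continuous in (u,v) for each fixed (x,y), with |G(x,y,u,v)| ≤ M(1+|u|+|v|). If uₙ → u in L¹(V,π), then ∬_{V×V} |G(x,y,uₙ(x),uₙ(y)) − G(x,y,u(x),u(y))| θ(dx dy) → 0 as n → ∞; in particular the operator 𝐆[w](x) := ∫_V G(x,y,w(x),w(y)) κ(x,dy) is continuous from L¹(V,π) to L¹(V,π). -/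
open MeasureTheory ProbabilityTheory Filter
open scoped ENNReal

/-!
The first marginal of `θ = π ⊗ₘ κ` is at most a constant multiple of `π` because `κ` is bounded, and
by detailed balance so is the second. Hence `uₙ → u` in `L¹(π)` implies
`(uₙ(x), uₙ(y)) → (u(x), u(y))` in `L¹(θ)`, and what remains is the `L¹`-continuity of the
superposition operator `w ↦ g(·, w(·))` of a Carathéodory function of linear growth. Along a
subsequence converging almost everywhere the integrands tend to zero pointwise and are at most an
integrable function plus a sequence tending to zero in `L¹`.
-/

open scoped NNReal Topology

section Superposition

variable {ι Ω E F : Type*} {mΩ : MeasurableSpace Ω} {μ : Measure Ω} {l : Filter ι}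

theorem tendsto_lintegral_zero_of_le_add [l.IsCountablyGenerated] {f e : ι → Ω → ℝ≥0∞}
    {b : Ω → ℝ≥0∞} (hf : ∀ i, AEMeasurable (f i) μ) (hb : AEMeasurable b μ)
    (hb_fin : ∫⁻ ω, b ω ∂μ ≠ ∞) (hle : ∀ i, ∀ᵐ ω ∂μ, f i ω ≤ b ω + e i ω)
    (hf_lim : ∀ᵐ ω ∂μ, Tendsto (fun i => f i ω) l (𝓝 0))
    (he_lim : Tendsto (fun i => ∫⁻ ω, e i ω ∂μ) l (𝓝 0)) :
    Tendsto (fun i => ∫⁻ ω, f i ω ∂μ) l (𝓝 0) := by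
  have hmin_meas : ∀ i, AEMeasurable (fun ω => min (f i ω) (b ω)) μ := fun i => (hf i).min hb
  have hmin_lim : Tendsto (fun i => ∫⁻ ω, min (f i ω) (b ω) ∂μ) l (𝓝 0) := by
    rw [← lintegral_zero (μ := μ)]
    refine tendsto_lintegral_filter_of_dominated_convergence' b (.of_forall hmin_meas)
      (.of_forall fun i => .of_forall fun ω => min_le_right _ _) hb_fin ?_
    filter_upwards [hf_lim] with ω hω
    exact tendsto_of_tendsto_of_tendsto_of_le_of_le tendsto_const_nhds hω
      (fun _ => zero_le) (fun _ => min_le_left _ _)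
  have hsplit : ∀ i, ∫⁻ ω, f i ω ∂μ ≤ ∫⁻ ω, min (f i ω) (b ω) ∂μ + ∫⁻ ω, e i ω ∂μ := by
    intro i
    rw [← lintegral_add_left' (hmin_meas i)]
    refine lintegral_mono_ae ?_
    filter_upwards [hle i] with ω hω
    rw [min_add]
    exact le_min le_self_add hω
  refine tendsto_of_tendsto_of_tendsto_of_le_of_le tendsto_const_nhds ?_ (fun _ => zero_le) hsplit
  simpa only [add_zero] using hmin_lim.add he_lim

variable [NormedAddCommGroup E] [NormedAddCommGroup F]

theorem tendsto_integral_norm_zero_iff_lintegral_enorm {f : ι → Ω → F}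
    (hf : ∀ i, Integrable (f i) μ) :
    Tendsto (fun i => ∫ ω, ‖f i ω‖ ∂μ) l (𝓝 0) ↔
      Tendsto (fun i => ∫⁻ ω, ‖f i ω‖ₑ ∂μ) l (𝓝 0) := by
  simp only [fun i => integral_norm_eq_lintegral_enorm (hf i).aestronglyMeasurable]
  rw [← ENNReal.toReal_zero,
    ENNReal.tendsto_toReal_iff (fun i => (hf i).hasFiniteIntegral.ne) ENNReal.zero_ne_top]

variable {g : Ω → E → F} {b : Ω → ℝ} {M : ℝ≥0}

theorem integrable_superposition {w : Ω → E} (hb : Integrable b μ)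
    (hg_growth : ∀ᵐ ω ∂μ, ∀ a, ‖g ω a‖ ≤ b ω + M * ‖a‖)
    (hw : Integrable w μ) (hgw : AEStronglyMeasurable (fun ω => g ω (w ω)) μ) :
    Integrable (fun ω => g ω (w ω)) μ :=
  (hb.add (hw.norm.const_mul (M : ℝ))).mono' hgw (hg_growth.mono fun ω hω => hω (w ω))

theorem enorm_sub_le_of_linear_growth {φ : E → F} {β : ℝ} (hφ : ∀ a, ‖φ a‖ ≤ β + M * ‖a‖)
    (a a' : E) :
    ‖φ a - φ a'‖ₑ ≤ ENNReal.ofReal (2 * (β + M * ‖a'‖)) + M * ‖a - a'‖ₑ := by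
  have hreal : ‖φ a - φ a'‖ ≤ 2 * (β + M * ‖a'‖) + M * ‖a - a'‖ :=
    calc ‖φ a - φ a'‖ ≤ ‖φ a‖ + ‖φ a'‖ := norm_sub_le _ _
      _ ≤ (β + M * ‖a‖) + (β + M * ‖a'‖) := add_le_add (hφ a) (hφ a')
      _ ≤ (β + M * (‖a'‖ + ‖a - a'‖)) + (β + M * ‖a'‖) := by
        gcongr
        exact norm_le_norm_add_norm_sub' a a'
      _ = 2 * (β + M * ‖a'‖) + M * ‖a - a'‖ := by ring
  calc ‖φ a - φ a'‖ₑ = ENNReal.ofReal ‖φ a - φ a'‖ := (ofReal_norm _).symm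
    _ ≤ ENNReal.ofReal (2 * (β + M * ‖a'‖)) + ENNReal.ofReal (M * ‖a - a'‖) :=
      (ENNReal.ofReal_le_ofReal hreal).trans ENNReal.ofReal_add_le
    _ = ENNReal.ofReal (2 * (β + M * ‖a'‖)) + M * ‖a - a'‖ₑ := by
      rw [ENNReal.ofReal_mul M.coe_nonneg, ENNReal.ofReal_coe_nnreal, ofReal_norm]

variable [l.IsCountablyGenerated] {w : ι → Ω → E} {wlim : Ω → E}

theorem tendsto_lintegral_enorm_superposition_sub_of_tendsto_ae
    (hg_cont : ∀ᵐ ω ∂μ, Continuous (g ω)) (hb : Integrable b μ)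
    (hg_growth : ∀ᵐ ω ∂μ, ∀ a, ‖g ω a‖ ≤ b ω + M * ‖a‖)
    (hgw : ∀ i, AEStronglyMeasurable (fun ω => g ω (w i ω)) μ)
    (hgwlim : AEStronglyMeasurable (fun ω => g ω (wlim ω)) μ) (hwlim : Integrable wlim μ)
    (hconv : Tendsto (fun i => ∫⁻ ω, ‖w i ω - wlim ω‖ₑ ∂μ) l (𝓝 0))
    (hae : ∀ᵐ ω ∂μ, Tendsto (fun i => w i ω) l (𝓝 (wlim ω))) :
    Tendsto (fun i => ∫⁻ ω, ‖g ω (w i ω) - g ω (wlim ω)‖ₑ ∂μ) l (𝓝 0) := by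
  have hbound : Integrable (fun ω => 2 * (b ω + M * ‖wlim ω‖)) μ :=
    (hb.add (hwlim.norm.const_mul _)).const_mul 2
  refine tendsto_lintegral_zero_of_le_add (e := fun i ω => M * ‖w i ω - wlim ω‖ₑ)
    (fun i => ((hgw i).sub hgwlim).enorm) hbound.aemeasurable.ennreal_ofReal
    hbound.lintegral_lt_top.ne ?_ ?_ ?_
  · intro i
    filter_upwards [hg_growth] with ω hω
    exact enorm_sub_le_of_linear_growth hω _ _
  · filter_upwards [hg_cont, hae] with ω hcont hω
    simpa only [sub_self, enorm_zero, Function.comp_apply] using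
      (((hcont.tendsto _).comp hω).sub_const (g ω (wlim ω))).enorm
  · simp only [lintegral_const_mul' _ _ ENNReal.coe_ne_top]
    simpa only [mul_zero] using ENNReal.Tendsto.const_mul hconv (.inr ENNReal.coe_ne_top)

theorem tendsto_lintegral_enorm_superposition_sub
    (hg_cont : ∀ᵐ ω ∂μ, Continuous (g ω)) (hb : Integrable b μ)
    (hg_growth : ∀ᵐ ω ∂μ, ∀ a, ‖g ω a‖ ≤ b ω + M * ‖a‖)
    (hgw : ∀ i, AEStronglyMeasurable (fun ω => g ω (w i ω)) μ)
    (hgwlim : AEStronglyMeasurable (fun ω => g ω (wlim ω)) μ)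
    (hw : ∀ i, AEStronglyMeasurable (w i) μ) (hwlim : Integrable wlim μ)
    (hconv : Tendsto (fun i => ∫⁻ ω, ‖w i ω - wlim ω‖ₑ ∂μ) l (𝓝 0)) :
    Tendsto (fun i => ∫⁻ ω, ‖g ω (w i ω) - g ω (wlim ω)‖ₑ ∂μ) l (𝓝 0) := by
  refine tendsto_of_subseq_tendsto fun ns hns => ?_
  have hmeasure : TendstoInMeasure μ (fun n => w (ns n)) atTop wlim := by
    refine tendstoInMeasure_of_tendsto_eLpNorm one_ne_zero (fun n => hw (ns n))
      hwlim.aestronglyMeasurable ?_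
    simp only [eLpNorm_one_eq_lintegral_enorm]
    exact hconv.comp hns
  obtain ⟨ms, hms, hae⟩ := hmeasure.exists_seq_tendsto_ae
  exact ⟨ms, tendsto_lintegral_enorm_superposition_sub_of_tendsto_ae hg_cont hb hg_growth
    (fun k => hgw (ns (ms k))) hgwlim hwlim (hconv.comp (hns.comp hms.tendsto_atTop)) hae⟩

end Superposition

section Marginals

variable {α β E F : Type*} {mα : MeasurableSpace α} {mβ : MeasurableSpace β}
  {μ : Measure α} {ν : Measure β} {C C₁ C₂ : ℝ≥0∞}

theorem lintegral_comp_le_of_map_le_smul {φ : α → β} {f : β → ℝ≥0∞} (hφ : AEMeasurable φ μ)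
    (hmap : μ.map φ ≤ C • ν) (hf : AEMeasurable f ν) :
    ∫⁻ x, f (φ x) ∂μ ≤ C * ∫⁻ y, f y ∂ν := by
  have hac : μ.map φ ≪ ν := Measure.absolutelyContinuous_of_le_smul hmap
  calc ∫⁻ x, f (φ x) ∂μ = ∫⁻ y, f y ∂(μ.map φ) := (lintegral_map' (hf.mono_ac hac) hφ).symm
    _ ≤ ∫⁻ y, f y ∂(C • ν) := lintegral_mono' hmap le_rfl
    _ = C * ∫⁻ y, f y ∂ν := lintegral_smul_measure C f

theorem fst_compProd_le_smul [SFinite μ] {κ : Kernel α β} [IsSFiniteKernel κ]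
    (hκ : ∀ x, κ x Set.univ ≤ C) : (μ ⊗ₘ κ).fst ≤ C • μ := by
  refine Measure.le_iff.2 fun s hs => ?_
  calc (μ ⊗ₘ κ).fst s = ∫⁻ x in s, κ x Set.univ ∂μ := by
        rw [Measure.fst_apply hs, ← Set.prod_univ, Measure.compProd_apply_prod hs .univ]
    _ ≤ ∫⁻ _ in s, C ∂μ := lintegral_mono hκ
    _ = (C • μ) s := by rw [setLIntegral_const, Measure.smul_apply, smul_eq_mul]

theorem integral_norm_integral_le_integral_norm_compProd [SFinite μ] {κ : Kernel α β}
    [IsSFiniteKernel κ] [NormedAddCommGroup F] [NormedSpace ℝ F] {h : α × β → F}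
    (hh : Integrable h (μ ⊗ₘ κ)) :
    ∫ x, ‖∫ y, h (x, y) ∂κ x‖ ∂μ ≤ ∫ p, ‖h p‖ ∂(μ ⊗ₘ κ) := by
  rw [Measure.integral_compProd hh.norm]
  exact integral_mono hh.integral_compProd.norm hh.norm.integral_compProd
    fun x => norm_integral_le_integral_norm _

variable [NormedAddCommGroup E] [NormedAddCommGroup F]

theorem enorm_le_enorm_fst_add_enorm_snd (q : E × F) : ‖q‖ₑ ≤ ‖q.1‖ₑ + ‖q.2‖ₑ := by
  simp only [enorm_eq_nnnorm, ← ENNReal.coe_add, ENNReal.coe_le_coe, Prod.nnnorm_def]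
  exact max_le le_self_add le_add_self

variable {θ : Measure (α × β)} {f : α → E} {g : β → F}

theorem aestronglyMeasurable_prodMap_of_marginal_le (h₁ : θ.fst ≤ C₁ • μ) (h₂ : θ.snd ≤ C₂ • ν)
    (hf : AEStronglyMeasurable f μ) (hg : AEStronglyMeasurable g ν) :
    AEStronglyMeasurable (Prod.map f g) θ :=
  ((hf.mono_ac (Measure.absolutelyContinuous_of_le_smul h₁)).comp_measurable measurable_fst).prodMk
    ((hg.mono_ac (Measure.absolutelyContinuous_of_le_smul h₂)).comp_measurable measurable_snd)

theorem lintegral_enorm_prodMap_le (h₁ : θ.fst ≤ C₁ • μ) (h₂ : θ.snd ≤ C₂ • ν)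
    (hf : AEStronglyMeasurable f μ) (hg : AEStronglyMeasurable g ν) :
    ∫⁻ p, ‖Prod.map f g p‖ₑ ∂θ ≤ C₁ * ∫⁻ x, ‖f x‖ₑ ∂μ + C₂ * ∫⁻ y, ‖g y‖ₑ ∂ν := by
  have hf_fst : AEMeasurable (fun p : α × β => ‖f p.1‖ₑ) θ :=
    ((hf.mono_ac (Measure.absolutelyContinuous_of_le_smul h₁)).comp_measurable
      measurable_fst).enorm
  calc ∫⁻ p, ‖Prod.map f g p‖ₑ ∂θ ≤ ∫⁻ p, ‖f p.1‖ₑ + ‖g p.2‖ₑ ∂θ :=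
        lintegral_mono fun p => enorm_le_enorm_fst_add_enorm_snd _
    _ = ∫⁻ p, ‖f p.1‖ₑ ∂θ + ∫⁻ p, ‖g p.2‖ₑ ∂θ := lintegral_add_left' hf_fst _
    _ ≤ C₁ * ∫⁻ x, ‖f x‖ₑ ∂μ + C₂ * ∫⁻ y, ‖g y‖ₑ ∂ν :=
      add_le_add
        (lintegral_comp_le_of_map_le_smul measurable_fst.aemeasurable h₁ hf.enorm)
        (lintegral_comp_le_of_map_le_smul measurable_snd.aemeasurable h₂ hg.enorm)

theorem integrable_prodMap_of_marginal_le (hC₁ : C₁ ≠ ∞) (hC₂ : C₂ ≠ ∞)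
    (h₁ : θ.fst ≤ C₁ • μ) (h₂ : θ.snd ≤ C₂ • ν) (hf : Integrable f μ) (hg : Integrable g ν) :
    Integrable (Prod.map f g) θ :=
  ⟨aestronglyMeasurable_prodMap_of_marginal_le h₁ h₂ hf.1 hg.1,
    (lintegral_enorm_prodMap_le h₁ h₂ hf.1 hg.1).trans_lt
      (ENNReal.add_lt_top.2 ⟨ENNReal.mul_lt_top hC₁.lt_top hf.2,
        ENNReal.mul_lt_top hC₂.lt_top hg.2⟩)⟩

theorem tendsto_lintegral_enorm_prodMap_sub {ι : Type*} {l : Filter ι} {u : ι → α → E}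
    {v : ι → β → F} (hC₁ : C₁ ≠ ∞) (hC₂ : C₂ ≠ ∞) (h₁ : θ.fst ≤ C₁ • μ) (h₂ : θ.snd ≤ C₂ • ν)
    (hu : ∀ i, AEStronglyMeasurable (u i) μ) (hv : ∀ i, AEStronglyMeasurable (v i) ν)
    (hf : AEStronglyMeasurable f μ) (hg : AEStronglyMeasurable g ν)
    (hu_lim : Tendsto (fun i => ∫⁻ x, ‖u i x - f x‖ₑ ∂μ) l (𝓝 0))
    (hv_lim : Tendsto (fun i => ∫⁻ y, ‖v i y - g y‖ₑ ∂ν) l (𝓝 0)) :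
    Tendsto (fun i => ∫⁻ p, ‖Prod.map (u i) (v i) p - Prod.map f g p‖ₑ ∂θ) l (𝓝 0) := by
  have hbound_lim := (ENNReal.Tendsto.const_mul hu_lim (.inr hC₁)).add
    (ENNReal.Tendsto.const_mul hv_lim (.inr hC₂))
  rw [mul_zero, mul_zero, add_zero] at hbound_lim
  exact tendsto_of_tendsto_of_tendsto_of_le_of_le tendsto_const_nhds hbound_lim
    (fun _ => zero_le)
    (fun i => lintegral_enorm_prodMap_le h₁ h₂ ((hu i).sub hf) ((hv i).sub hg))

end Marginals

section NonlocalIntegrand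

variable {V E F : Type*} [MeasurableSpace V] [NormedAddCommGroup E] [NormedAddCommGroup F]
  {π : Measure V} {θ : Measure (V × V)} {C₁ C₂ : ℝ≥0∞} {G : V → V → E → E → F} {b : V × V → ℝ}
  {M : ℝ≥0}

theorem norm_le_add_two_mul_norm_prod {φ : E → E → F} {β : ℝ}
    (hφ : ∀ a c, ‖φ a c‖ ≤ β + M * (‖a‖ + ‖c‖)) (q : E × E) :
    ‖φ q.1 q.2‖ ≤ β + (2 * M : ℝ≥0) * ‖q‖ :=
  calc ‖φ q.1 q.2‖ ≤ β + M * (‖q.1‖ + ‖q.2‖) := hφ q.1 q.2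
    _ ≤ β + M * (‖q‖ + ‖q‖) := by
      gcongr
      exacts [norm_fst_le q, norm_snd_le q]
    _ = β + (2 * M : ℝ≥0) * ‖q‖ := by push_cast; ring

variable [MeasurableSpace E] [BorelSpace E]

theorem aestronglyMeasurable_nonlocal_integrand {w : V → E}
    (hGmeas : StronglyMeasurable fun p : (V × V) × E × E => G p.1.1 p.1.2 p.2.1 p.2.2)
    (h₁ : θ.fst ≤ C₁ • π) (h₂ : θ.snd ≤ C₂ • π) (hw : AEStronglyMeasurable w π) :
    AEStronglyMeasurable (fun p : V × V => G p.1 p.2 (w p.1) (w p.2)) θ := by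
  have hw_fst : AEMeasurable (fun p : V × V => w p.1) θ :=
    (hw.aemeasurable.mono_ac (Measure.absolutelyContinuous_of_le_smul h₁)).comp_measurable
      measurable_fst
  have hw_snd : AEMeasurable (fun p : V × V => w p.2) θ :=
    (hw.aemeasurable.mono_ac (Measure.absolutelyContinuous_of_le_smul h₂)).comp_measurable
      measurable_snd
  exact hGmeas.aestronglyMeasurable.comp_aemeasurable
    (aemeasurable_id.prodMk (hw_fst.prodMk hw_snd))

theorem integrable_nonlocal_integrand {w : V → E}
    (hGmeas : StronglyMeasurable fun p : (V × V) × E × E => G p.1.1 p.1.2 p.2.1 p.2.2)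
    (hb : Integrable b θ) (hGgrowth : ∀ x y a c, ‖G x y a c‖ ≤ b (x, y) + M * (‖a‖ + ‖c‖))
    (hC₁ : C₁ ≠ ∞) (hC₂ : C₂ ≠ ∞) (h₁ : θ.fst ≤ C₁ • π) (h₂ : θ.snd ≤ C₂ • π)
    (hw : Integrable w π) :
    Integrable (fun p : V × V => G p.1 p.2 (w p.1) (w p.2)) θ :=
  integrable_superposition (g := fun p q => G p.1 p.2 q.1 q.2) hb
    (.of_forall fun p => norm_le_add_two_mul_norm_prod (hGgrowth p.1 p.2))
    (integrable_prodMap_of_marginal_le hC₁ hC₂ h₁ h₂ hw hw)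
    (aestronglyMeasurable_nonlocal_integrand hGmeas h₁ h₂ hw.1)

theorem tendsto_lintegral_enorm_nonlocal_integrand_sub {ι : Type*} {l : Filter ι}
    [l.IsCountablyGenerated] {u : ι → V → E} {ulim : V → E}
    (hGmeas : StronglyMeasurable fun p : (V × V) × E × E => G p.1.1 p.1.2 p.2.1 p.2.2)
    (hGcont : ∀ x y, Continuous fun q : E × E => G x y q.1 q.2)
    (hb : Integrable b θ) (hGgrowth : ∀ x y a c, ‖G x y a c‖ ≤ b (x, y) + M * (‖a‖ + ‖c‖))
    (hC₁ : C₁ ≠ ∞) (hC₂ : C₂ ≠ ∞) (h₁ : θ.fst ≤ C₁ • π) (h₂ : θ.snd ≤ C₂ • π)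
    (hu : ∀ i, AEStronglyMeasurable (u i) π) (hulim : Integrable ulim π)
    (hconv : Tendsto (fun i => ∫⁻ x, ‖u i x - ulim x‖ₑ ∂π) l (𝓝 0)) :
    Tendsto (fun i => ∫⁻ p : V × V,
      ‖G p.1 p.2 (u i p.1) (u i p.2) - G p.1 p.2 (ulim p.1) (ulim p.2)‖ₑ ∂θ) l (𝓝 0) := by
  have hconv_pair := tendsto_lintegral_enorm_prodMap_sub hC₁ hC₂ h₁ h₂ hu hu hulim.1 hulim.1
    hconv hconv
  have hmeas {w : V → E} (hw : AEStronglyMeasurable w π) :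
      AEStronglyMeasurable (fun p : V × V => G p.1 p.2 (w p.1) (w p.2)) θ :=
    aestronglyMeasurable_nonlocal_integrand hGmeas h₁ h₂ hw
  exact tendsto_lintegral_enorm_superposition_sub
    (g := fun (p : V × V) (q : E × E) => G p.1 p.2 q.1 q.2)
    (w := fun i => Prod.map (u i) (u i)) (wlim := Prod.map ulim ulim)
    (.of_forall fun p => hGcont p.1 p.2) hb
    (.of_forall fun p => norm_le_add_two_mul_norm_prod (hGgrowth p.1 p.2))
    (fun i => hmeas (hu i)) (hmeas hulim.1)
    (fun i => aestronglyMeasurable_prodMap_of_marginal_le h₁ h₂ (hu i) (hu i))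
    (integrable_prodMap_of_marginal_le hC₁ hC₂ h₁ h₂ hulim hulim) hconv_pair

end NonlocalIntegrand

section NonlocalOperator

variable {V E F : Type*} [MeasurableSpace V] [NormedAddCommGroup F] [NormedSpace ℝ F]

/-- The nonlocal operator `𝐆[w](x) = ∫ G(x, y, w(x), w(y)) κ(x, dy)`, whose `L¹`-continuity is the
subject of the theorem. At points `x` where the integrand is not `κ x`-integrable, the Bochner
integral gives it the value `0`. -/
noncomputable def nonlocalOperator (κ : Kernel V V) (G : V → V → E → E → F) (w : V → E) (x : V) :
    F :=
  ∫ y, G x y (w x) (w y) ∂κ x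

variable {π : Measure V} [SFinite π] {κ : Kernel V V} {G : V → V → E → E → F}

theorem integral_norm_nonlocalOperator_sub_le [IsSFiniteKernel κ] {v w : V → E}
    (hv : Integrable (fun p : V × V => G p.1 p.2 (v p.1) (v p.2)) (π ⊗ₘ κ))
    (hw : Integrable (fun p : V × V => G p.1 p.2 (w p.1) (w p.2)) (π ⊗ₘ κ)) :
    ∫ x, ‖nonlocalOperator κ G v x - nonlocalOperator κ G w x‖ ∂π ≤
      ∫ p : V × V, ‖G p.1 p.2 (v p.1) (v p.2) - G p.1 p.2 (w p.1) (w p.2)‖ ∂(π ⊗ₘ κ) := by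
  refine le_of_eq_of_le (integral_congr_ae ?_)
    (integral_norm_integral_le_integral_norm_compProd (hv.sub hw))
  filter_upwards [((Measure.integrable_compProd_iff hv.1).1 hv).1,
    ((Measure.integrable_compProd_iff hw.1).1 hw).1] with x hvx hwx
  exact congrArg norm (integral_sub hvx hwx).symm

theorem nonlocal_operator_L1_continuous_general [NormedAddCommGroup E] [MeasurableSpace E]
    [BorelSpace E] [IsFiniteKernel κ] {C : ℝ≥0∞} (hC : C ≠ ∞) (hκπ : κ ∘ₘ π ≤ C • π)
    (hGmeas : StronglyMeasurable fun p : (V × V) × E × E => G p.1.1 p.1.2 p.2.1 p.2.2)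
    (hGcont : ∀ x y, Continuous fun q : E × E => G x y q.1 q.2)
    {b : V × V → ℝ} (hb : Integrable b (π ⊗ₘ κ)) {M : ℝ≥0}
    (hGgrowth : ∀ x y a c, ‖G x y a c‖ ≤ b (x, y) + M * (‖a‖ + ‖c‖))
    {ι : Type*} {l : Filter ι} [l.IsCountablyGenerated] {u : ι → V → E} {ulim : V → E}
    (hu : ∀ i, Integrable (u i) π) (hulim : Integrable ulim π)
    (hconv : Tendsto (fun i => ∫ x, ‖u i x - ulim x‖ ∂π) l (𝓝 0)) :
    Tendsto (fun i => ∫⁻ p : V × V,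
        ‖G p.1 p.2 (u i p.1) (u i p.2) - G p.1 p.2 (ulim p.1) (ulim p.2)‖ₑ ∂(π ⊗ₘ κ)) l (𝓝 0) ∧
    Tendsto (fun i => ∫ x, ‖nonlocalOperator κ G (u i) x - nonlocalOperator κ G ulim x‖ ∂π)
      l (𝓝 0) := by
  have hfst : (π ⊗ₘ κ).fst ≤ κ.bound • π := fst_compProd_le_smul fun x => κ.measure_le_bound x _
  have hsnd : (π ⊗ₘ κ).snd ≤ C • π := by rwa [Measure.snd_compProd]
  have hint {w : V → E} (hw : Integrable w π) :
      Integrable (fun p : V × V => G p.1 p.2 (w p.1) (w p.2)) (π ⊗ₘ κ) :=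
    integrable_nonlocal_integrand hGmeas hb hGgrowth κ.bound_ne_top hC hfst hsnd hw
  have hintegrand := tendsto_lintegral_enorm_nonlocal_integrand_sub hGmeas hGcont hb hGgrowth
    κ.bound_ne_top hC hfst hsnd (fun i => (hu i).1) hulim
    ((tendsto_integral_norm_zero_iff_lintegral_enorm fun i => (hu i).sub hulim).1 hconv)
  exact ⟨hintegrand, squeeze_zero (fun i => integral_nonneg fun x => norm_nonneg _)
    (fun i => integral_norm_nonlocalOperator_sub_le (hint (hu i)) (hint hulim))
    ((tendsto_integral_norm_zero_iff_lintegral_enorm fun i => (hint (hu i)).sub (hint hulim)).2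
      hintegrand)⟩

end NonlocalOperator

section DetailedBalance

variable {V : Type*} [MeasurableSpace V] {π : Measure V} [SFinite π] {κ : Kernel V V}
  [IsSFiniteKernel κ]

theorem comp_le_smul_of_map_swap_compProd_eq {C : ℝ≥0∞} (hκ : ∀ x, κ x Set.univ ≤ C)
    (hdb : (π ⊗ₘ κ).map Prod.swap = π ⊗ₘ κ) : κ ∘ₘ π ≤ C • π :=
  calc κ ∘ₘ π = (π ⊗ₘ κ).snd := (Measure.snd_compProd π κ).symm
    _ = (π ⊗ₘ κ).fst := by rw [← Measure.fst_map_swap, hdb]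
    _ ≤ C • π := fst_compProd_le_smul hκ

end DetailedBalance

/-- `L¹`-continuity of the nonlocal operator: if `uₙ → u` in `L¹(V,π)` then
`∬ |G(x,y,uₙ(x),uₙ(y)) − G(x,y,u(x),u(y))| dθ → 0`, and in particular
`𝐆[uₙ] → 𝐆[u]` in `L¹(V,π)`. -/
theorem nonlocal_operator_L1_continuous
    {V : Type*} [MeasurableSpace V]
    (π : Measure V) [IsFiniteMeasure π]
    (κ : Kernel V V) [IsFiniteKernel κ]
    (K : ℝ) (hK0 : 0 ≤ K) (hK : ∀ x, κ x Set.univ ≤ ENNReal.ofReal K)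
    (hdb : (π ⊗ₘ κ).map Prod.swap = π ⊗ₘ κ)
    (M : ℝ) (hM : 0 < M)
    (G : V → V → ℝ → ℝ → ℝ)
    (hGmeas : Measurable fun p : (V × V) × ℝ × ℝ => G p.1.1 p.1.2 p.2.1 p.2.2)
    (hGcont : ∀ x y : V, Continuous fun q : ℝ × ℝ => G x y q.1 q.2)
    (hGbound : ∀ (x y : V) (a b : ℝ), |G x y a b| ≤ M * (1 + |a| + |b|))
    (u : ℕ → V → ℝ) (ulim : V → ℝ)
    (humeas : ∀ n, Measurable (u n)) (huint : ∀ n, Integrable (u n) π)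
    (hlimmeas : Measurable ulim) (hlimint : Integrable ulim π)
    (hconv : Tendsto (fun n => ∫ x, |u n x - ulim x| ∂π) atTop (nhds 0)) :
    Tendsto (fun n => ∫⁻ p : V × V,
        ENNReal.ofReal |G p.1 p.2 (u n p.1) (u n p.2)
          - G p.1 p.2 (ulim p.1) (ulim p.2)| ∂(π ⊗ₘ κ)) atTop (nhds 0) ∧
    Tendsto (fun n => ∫ x, |(∫ y, G x y (u n x) (u n y) ∂(κ x))
        - (∫ y, G x y (ulim x) (ulim y) ∂(κ x))| ∂π) atTop (nhds 0) := by
  lift M to ℝ≥0 using hM.le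
  simpa only [Real.enorm_eq_ofReal_abs, Real.norm_eq_abs, nonlocalOperator] using
    nonlocal_operator_L1_continuous_general ENNReal.ofReal_ne_top
      (comp_le_smul_of_map_swap_compProd_eq hK hdb) hGmeas.stronglyMeasurable hGcont
      (integrable_const (M : ℝ))
      (fun x y a c => (hGbound x y a c).trans_eq (by simp only [Real.norm_eq_abs]; ring))
      huint hlimint hconv
end

section
/- Let V, π, κ, θ be as in the kernel setting with detailed balance, and let G: V×V×ℝ×ℝ → ℝ be jointly measurable, continuous in (u,v), with |G(x,y,u,v)| ≤ M(1+|u|+|v|), skew-symmetric (G(x,y,u,v) = −G(y,x,v,u)), and ℓ-dissipative (u ≤ u' implies G(x,y,u',v) − G(x,y,u,v) ≤ ℓ(u'−u), for some ℓ ≥ 0). Let u be a pointwise solution of the Cauchy problem u̇ = 𝐆[u] on [0,∞). (1) If ū ∈ ℝ satisfies 0 = G(x,y,ū,ū) ≤ G(x,y,ū,v) for all (x,y) ∈ V×V and all v ≥ ū, and u₀ ≥ ū π-a.e., then u_t ≥ ū π-a.e. for every t ≥ 0. (2) If ū ∈ ℝ satisfies 0 = G(x,y,ū,ū) ≥ G(x,y,ū,v)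 for all (x,y) ∈ V×V and all v ≤ ū, and u₀ ≤ ū π-a.e., then u_t ≤ ū π-a.e. for every t ≥ 0. -/
open MeasureTheory ProbabilityTheory Filter
open scoped ENNReal

/-- A pointwise solution of the Cauchy problem `u̇ = 𝐆[u]` on `[0,∞)`:
`u` is jointly measurable, `u_t` is `π`-integrable for every `t ≥ 0`, the time
derivative `𝐆[u_t](x) = ∫ G(x,y,u_t(x),u_t(y)) κ(x,dy)` is integrable on
`(0,T] × V` for every `T > 0`, and for `π`-a.e. `x` the map `t ↦ u_t(x)` is
locally absolutely continuous with `(d/dt)u_t(x) = 𝐆[u_t](x)` a.e., expressed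
in the equivalent integral form. -/
def IsPointwiseSolution {V : Type*} [MeasurableSpace V] (π : Measure V)
    (κ : Kernel V V) (G : V → V → ℝ → ℝ → ℝ) (u : ℝ → V → ℝ) : Prop :=
  Measurable (fun p : ℝ × V => u p.1 p.2) ∧
  (∀ t : ℝ, 0 ≤ t → Integrable (u t) π) ∧
  (∀ T : ℝ, 0 < T →
    ∫⁻ t in Set.Ioc (0:ℝ) T,
      ∫⁻ x, ENNReal.ofReal |∫ y, G x y (u t x) (u t y) ∂(κ x)| ∂π < ⊤) ∧
  (∀ᵐ x ∂π, ∀ t : ℝ, 0 ≤ t →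
    u t x = u 0 x + ∫ s in Set.Ioc (0:ℝ) t, ∫ y, G x y (u s x) (u s y) ∂(κ x))

/-!
Let `φ(t) = ∫ (c - u_t)⁺ dπ` be the total deficit below the level `c`, and `S_t = {u_t < c}`. Since
`r ↦ (c - r)⁺` is Lipschitz, the chain rule holds a.e. in time, and Fubini gives
`φ'(t) = -∫_{S_t} 𝐆[u_t] dπ`. By detailed balance and skew-symmetry the exchange inside
`S_t × S_t` cancels, so only pairs in `S_t × S_tᶜ` contribute. There dissipativity, together with
`G(x, y, c, v) ≥ 0` for `v ≥ c`, bounds `-G` by `ℓ (c - u_t)⁺`. Hence `φ' ≤ ℓ ‖κ_V‖_∞ φ`, and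
`φ(0) = 0` forces `φ = 0` by Grönwall. The upper bound is the lower bound for `-u`, which solves
the equation for `-G(x, y, -a, -b)`.
-/

open Set
open scoped Interval NNReal

theorem nonpos_of_le_const_mul_integral {φ : ℝ → ℝ} {K a b : ℝ} (hK : 0 ≤ K)
    (hφ : ContinuousOn φ (Icc a b)) (hle : ∀ t ∈ Icc a b, φ t ≤ K * ∫ s in a..t, φ s)
    {t : ℝ} (ht : t ∈ Icc a b) : φ t ≤ 0 := by
  have hab : a ≤ b := ht.1.trans ht.2
  have hint : IntervalIntegrable φ volume a b := hφ.intervalIntegrable_of_Icc hab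
  have hcont : ContinuousOn (fun t ↦ ∫ s in a..t, φ s) (Icc a b) := by
    simpa only [uIcc_of_le hab] using
      intervalIntegral.continuousOn_primitive_interval' hint left_mem_uIcc
  have hderiv (r : ℝ) (hr : r ∈ Ico a b) :
      HasDerivWithinAt (fun t ↦ ∫ s in a..t, φ s) (φ r) (Ici r) r := by
    have hr' : Icc a b ∈ nhdsWithin r (Ioi r) :=
      mem_of_superset (Ioc_mem_nhdsGT hr.2) fun s hs ↦ ⟨hr.1.trans hs.1.le, hs.2⟩
    exact intervalIntegral.integral_hasDerivWithinAt_right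
      (hint.mono_set (uIcc_subset_uIcc_left (by rw [uIcc_of_le hab]; exact ⟨hr.1, hr.2.le⟩)))
      ⟨Icc a b, hr', hφ.aestronglyMeasurable measurableSet_Icc⟩
      ((hφ r ⟨hr.1, hr.2.le⟩).mono_of_mem_nhdsWithin hr')
  have hprim : ∫ s in a..t, φ s ≤ 0 := by
    simpa only [gronwallBound_ε0_δ0] using
      le_gronwallBound_of_liminf_deriv_right_le (K := K) (ε := 0) hcont
        (fun r hr _ ↦ (hderiv r hr).liminf_right_slope_le) intervalIntegral.integral_same.le
        (fun r hr ↦ by simpa only [add_zero] using hle r (Ico_subset_Icc_self hr)) t ht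
  exact (hle t ht).trans (mul_nonpos_of_nonneg_of_nonpos hK hprim)

theorem absolutelyContinuousOnInterval_comp_of_lipschitzWith {X Y : Type*} [PseudoMetricSpace X]
    [PseudoMetricSpace Y] {φ : X → Y} {f : ℝ → X} {C : ℝ≥0} {a b : ℝ} (hφ : LipschitzWith C φ)
    (hf : AbsolutelyContinuousOnInterval f a b) :
    AbsolutelyContinuousOnInterval (φ ∘ f) a b := by
  have hCf : Tendsto (fun I : ℕ × (ℕ → ℝ × ℝ) ↦
      C * ∑ i ∈ Finset.range I.1, dist (f (I.2 i).1) (f (I.2 i).2))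
      (AbsolutelyContinuousOnInterval.totalLengthFilter ⊓
        𝓟 (AbsolutelyContinuousOnInterval.disjWithin a b)) (nhds 0) := by
    simpa only [mul_zero] using Tendsto.const_mul (C : ℝ) hf
  refine squeeze_zero (fun _ ↦ Finset.sum_nonneg fun _ _ ↦ dist_nonneg) (fun I ↦ ?_) hCf
  rw [Finset.mul_sum]
  exact Finset.sum_le_sum fun i _ ↦ hφ.dist_le_mul _ _

theorem deriv_max_const_sub {F : ℝ → ℝ} {F' s : ℝ} (c : ℝ) (hF : HasDerivAt F F' s) :
    deriv (fun t ↦ max (c - F t) 0) s = if F s < c then -F' else 0 := by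
  split_ifs with hlt
  · have heq : (fun t ↦ max (c - F t) 0) =ᶠ[nhds s] fun t ↦ c - F t := by
      filter_upwards [hF.continuousAt.eventually_lt continuousAt_const hlt] with t ht
      exact max_eq_left (sub_nonneg.2 ht.le)
    rw [heq.deriv_eq, (hF.const_sub c).deriv]
  · have hzero : max (c - F s) 0 = 0 := max_eq_right (sub_nonpos.2 (not_lt.1 hlt))
    have hmin : IsLocalMin (fun t ↦ max (c - F t) 0) s :=
      Eventually.of_forall fun t ↦ hzero.trans_le (le_max_right _ _)
    exact hmin.deriv_eq_zero

theorem integral_indicator_lt_deriv_eq {F : ℝ → ℝ} {a b : ℝ}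
    (hF : AbsolutelyContinuousOnInterval F a b) (c : ℝ) :
    ∫ s in a..b, {s | F s < c}.indicator (deriv F) s =
      max (c - F a) 0 - max (c - F b) 0 := by
  have hlip : LipschitzWith 1 fun r : ℝ ↦ max (c - r) 0 := by
    simpa using ((LipschitzWith.const c).sub LipschitzWith.id).max_const 0
  have hderiv : ∀ᵐ s, s ∈ Ι a b →
      deriv (fun t ↦ max (c - F t) 0) s = -{s | F s < c}.indicator (deriv F) s := by
    filter_upwards [hF.ae_differentiableAt] with s hs hmem
    rw [deriv_max_const_sub c (hs (uIoc_subset_uIcc hmem)).hasDerivAt]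
    simp only [indicator, mem_ofPred_eq]
    split_ifs <;> simp
  have hftc : ∫ s in a..b, deriv (fun t ↦ max (c - F t) 0) s = max (c - F b) 0 - max (c - F a) 0 :=
    (absolutelyContinuousOnInterval_comp_of_lipschitzWith hlip hF).integral_deriv_eq_sub
  rw [intervalIntegral.integral_congr_ae hderiv, intervalIntegral.integral_neg] at hftc
  linarith

theorem integral_indicator_lt_eq_of_eq_add_integral {f g : ℝ → ℝ} {a b : ℝ} (hab : a ≤ b)
    (hg : IntervalIntegrable g volume a b)
    (hf : ∀ t ∈ Icc a b, f t = f a + ∫ s in a..t, g s) (c : ℝ) :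
    ∫ s in a..b, {s | f s < c}.indicator g s = max (c - f a) 0 - max (c - f b) 0 := by
  set F : ℝ → ℝ := fun t ↦ f a + ∫ s in a..t, g s
  have hfF : EqOn f F (Icc a b) := hf
  have hF : AbsolutelyContinuousOnInterval F a b :=
    (LipschitzWith.const (f a)).lipschitzOnWith.absolutelyContinuousOnInterval.add
      (hg.absolutelyContinuousOnInterval_intervalIntegral left_mem_uIcc)
  have hae : ∀ᵐ s, s ∈ Ι a b →
      {s | f s < c}.indicator g s = {s | F s < c}.indicator (deriv F) s := by
    filter_upwards [hg.ae_hasDerivAt_integral] with s hs hmem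
    have hmem' := uIoc_subset_uIcc hmem
    have hderiv : deriv F s = g s := ((hs hmem' a left_mem_uIcc).const_add (f a)).deriv
    rw [uIcc_of_le hab] at hmem'
    simp only [indicator, mem_ofPred_eq, hfF hmem', hderiv]
  rw [intervalIntegral.integral_congr_ae hae, integral_indicator_lt_deriv_eq hF c,
    ← hfF (left_mem_Icc.2 hab), ← hfF (right_mem_Icc.2 hab)]

section SwapInvariant

variable {α : Type*} [MeasurableSpace α] {θ : Measure (α × α)} {f : α × α → ℝ}

theorem setIntegral_prod_self_eq_zero_of_swap_eq_neg (hθ : θ.map Prod.swap = θ)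
    (hf : ∀ p, f p.swap = -f p) (S : Set α) : ∫ p in S ×ˢ S, f p ∂θ = 0 := by
  have hmp : MeasurePreserving Prod.swap θ θ := ⟨measurable_swap, hθ⟩
  have hswap := hmp.setIntegral_preimage_emb MeasurableEquiv.prodComm.measurableEmbedding f (S ×ˢ S)
  simp only [preimage_swap_prod, hf, integral_neg] at hswap
  linarith

theorem setIntegral_prod_univ_eq_of_swap_eq_neg (hθ : θ.map Prod.swap = θ)
    (hfi : Integrable f θ) (hf : ∀ p, f p.swap = -f p) {S : Set α} (hS : MeasurableSet S) :
    ∫ p in S ×ˢ univ, f p ∂θ = ∫ p in S ×ˢ Sᶜ, f p ∂θ := by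
  have hdisj : Disjoint (S ×ˢ S) (S ×ˢ Sᶜ) := disjoint_compl_right.set_prod_right _ _
  rw [← union_compl_self S, prod_union,
    setIntegral_union hdisj (hS.prod hS.compl) hfi.integrableOn hfi.integrableOn,
    setIntegral_prod_self_eq_zero_of_swap_eq_neg hθ hf, zero_add]

end SwapInvariant

section CompProd

variable {α β : Type*} [MeasurableSpace α] [MeasurableSpace β] {μ : Measure α} [SFinite μ]
  {κ : Kernel α β} [IsFiniteKernel κ]

theorem fst_compProd_le_bound_smul : (μ ⊗ₘ κ).fst ≤ κ.bound • μ := by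
  refine Measure.le_intro fun s hs _ ↦ ?_
  calc (μ ⊗ₘ κ).fst s = ∫⁻ a in s, κ a univ ∂μ := by
        rw [Measure.fst_apply hs, ← prod_univ, Measure.compProd_apply_prod hs .univ]
    _ ≤ ∫⁻ _ in s, κ.bound ∂μ := lintegral_mono fun a ↦ κ.measure_le_bound a univ
    _ = (κ.bound • μ) s := by simp

theorem integrable_comp_fst_compProd {f : α → ℝ} (hf : Integrable f μ) :
    Integrable (fun p : α × β ↦ f p.1) (μ ⊗ₘ κ) :=
  Integrable.comp_measurable
    ((hf.smul_measure κ.bound_ne_top).mono_measure fst_compProd_le_bound_smul) measurable_fst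

theorem integral_comp_fst_compProd_le {f : α → ℝ} (hf : Integrable f μ) (hf0 : 0 ≤ f) :
    ∫ p, f p.1 ∂(μ ⊗ₘ κ) ≤ κ.bound.toReal * ∫ x, f x ∂μ := by
  have hf' : Integrable f (κ.bound • μ) := hf.smul_measure κ.bound_ne_top
  calc ∫ p, f p.1 ∂(μ ⊗ₘ κ) = ∫ x, f x ∂(μ ⊗ₘ κ).fst :=
        (integral_map measurable_fst.aemeasurable
          (hf'.mono_measure fst_compProd_le_bound_smul).aestronglyMeasurable).symm
    _ ≤ ∫ x, f x ∂(κ.bound • μ) :=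
        integral_mono_measure fst_compProd_le_bound_smul (Eventually.of_forall hf0) hf'
    _ = κ.bound.toReal * ∫ x, f x ∂μ := by rw [integral_smul_measure, smul_eq_mul]

end CompProd

/-- The operator `𝐆[v](x) = ∫ G(x, y, v(x), v(y)) κ(x, dy)` driving the evolution. -/
noncomputable def drift {V : Type*} [MeasurableSpace V] (κ : Kernel V V)
    (G : V → V → ℝ → ℝ → ℝ) (v : V → ℝ) (x : V) : ℝ :=
  ∫ y, G x y (v x) (v y) ∂κ x

/-- The level `c` is a lower barrier for `G` with rate `ℓ`: across the level, a value `a < c` is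
pushed further down at most linearly in its deficit `c - a`. -/
def IsLowerBarrier {V : Type*} (G : V → V → ℝ → ℝ → ℝ) (ℓ c : ℝ) : Prop :=
  ∀ x y a b, a < c → c ≤ b → -(ℓ * (c - a)) ≤ G x y a b

/-- The level `c` is an upper barrier for `G` with rate `ℓ`: across the level, a value `a > c` is
pushed further up at most linearly in its excess `a - c`. -/
def IsUpperBarrier {V : Type*} (G : V → V → ℝ → ℝ → ℝ) (ℓ c : ℝ) : Prop :=
  ∀ x y a b, c < a → b ≤ c → G x y a b ≤ ℓ * (a - c)

/-- The conjugate of `G` under `u ↦ -u`, which exchanges lower and upper barriers. -/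
def negConj {V : Type*} (G : V → V → ℝ → ℝ → ℝ) (x y : V) (a b : ℝ) : ℝ :=
  -G x y (-a) (-b)

section Barrier

variable {V : Type*} {G : V → V → ℝ → ℝ → ℝ} {ℓ c : ℝ}

theorem isLowerBarrier_of_dissipative
    (hdiss : ∀ x y a a' b, a ≤ a' → G x y a' b - G x y a b ≤ ℓ * (a' - a))
    (hc : ∀ x y v, c ≤ v → 0 ≤ G x y c v) : IsLowerBarrier G ℓ c := fun x y a b ha hb ↦ by
  linarith [hdiss x y a c b ha.le, hc x y b hb]

theorem isUpperBarrier_of_dissipative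
    (hdiss : ∀ x y a a' b, a ≤ a' → G x y a' b - G x y a b ≤ ℓ * (a' - a))
    (hc : ∀ x y v, v ≤ c → G x y c v ≤ 0) : IsUpperBarrier G ℓ c := fun x y a b ha hb ↦ by
  linarith [hdiss x y c a b ha.le, hc x y b hb]

theorem IsUpperBarrier.isLowerBarrier_negConj (hc : IsUpperBarrier G ℓ c) :
    IsLowerBarrier (negConj G) ℓ (-c) := fun x y a b ha hb ↦ by
  have hG := hc x y (-a) (-b) (lt_neg_of_lt_neg ha) (neg_le_of_neg_le hb)
  rw [negConj]
  linarith

end Barrier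

section Drift

variable {V : Type*} [MeasurableSpace V] {π : Measure V} {κ : Kernel V V}
  {G : V → V → ℝ → ℝ → ℝ} {ℓ c : ℝ}

theorem setIntegral_drift_eq_setIntegral_prod_compl [SFinite π] [IsSFiniteKernel κ] {v : V → ℝ}
    (hdb : (π ⊗ₘ κ).map Prod.swap = π ⊗ₘ κ) (hskew : ∀ x y a b, G x y a b = -G y x b a)
    (hint : Integrable (fun p : V × V ↦ G p.1 p.2 (v p.1) (v p.2)) (π ⊗ₘ κ))
    {S : Set V} (hS : MeasurableSet S) :
    ∫ x in S, drift κ G v x ∂π = ∫ p in S ×ˢ Sᶜ, G p.1 p.2 (v p.1) (v p.2) ∂(π ⊗ₘ κ) := by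
  rw [← setIntegral_prod_univ_eq_of_swap_eq_neg hdb hint (fun _ ↦ hskew _ _ _ _) hS,
    Measure.setIntegral_compProd hS .univ hint.integrableOn]
  simp only [Measure.restrict_univ, drift]

theorem neg_setIntegral_drift_le_integral_deficit [SFinite π] [IsFiniteKernel κ] {v : V → ℝ}
    (hdb : (π ⊗ₘ κ).map Prod.swap = π ⊗ₘ κ) (hskew : ∀ x y a b, G x y a b = -G y x b a)
    (hℓ : 0 ≤ ℓ) (hc : IsLowerBarrier G ℓ c) (hv : Measurable v)
    (hdef : Integrable (fun x ↦ max (c - v x) 0) π)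
    (hint : Integrable (fun p : V × V ↦ G p.1 p.2 (v p.1) (v p.2)) (π ⊗ₘ κ)) :
    -∫ x in {x | v x < c}, drift κ G v x ∂π ≤
      ℓ * κ.bound.toReal * ∫ x, max (c - v x) 0 ∂π := by
  set S : Set V := {x | v x < c}
  have hS : MeasurableSet S := measurableSet_lt hv measurable_const
  have hdef' : Integrable (fun p : V × V ↦ ℓ * max (c - v p.1) 0) (π ⊗ₘ κ) :=
    (integrable_comp_fst_compProd hdef).const_mul ℓ
  have hnonneg : 0 ≤ fun x ↦ max (c - v x) 0 := fun _ ↦ le_max_right _ _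
  have hcross : ∀ p ∈ S ×ˢ Sᶜ, -G p.1 p.2 (v p.1) (v p.2) ≤ ℓ * max (c - v p.1) 0 := by
    rintro ⟨x, y⟩ ⟨hx : v x < c, hy : ¬v y < c⟩
    rw [max_eq_left (sub_nonneg.2 hx.le)]
    exact neg_le.1 (hc x y _ _ hx (not_lt.1 hy))
  calc -∫ x in S, drift κ G v x ∂π
      = ∫ p in S ×ˢ Sᶜ, -G p.1 p.2 (v p.1) (v p.2) ∂(π ⊗ₘ κ) := by
        rw [setIntegral_drift_eq_setIntegral_prod_compl hdb hskew hint hS, integral_neg]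
    _ ≤ ∫ p in S ×ˢ Sᶜ, ℓ * max (c - v p.1) 0 ∂(π ⊗ₘ κ) :=
        setIntegral_mono_on hint.neg.integrableOn hdef'.integrableOn (hS.prod hS.compl) hcross
    _ ≤ ∫ p, ℓ * max (c - v p.1) 0 ∂(π ⊗ₘ κ) :=
        setIntegral_le_integral hdef' (Eventually.of_forall fun p ↦ mul_nonneg hℓ (hnonneg p.1))
    _ ≤ ℓ * κ.bound.toReal * ∫ x, max (c - v x) 0 ∂π := by
        rw [integral_const_mul, mul_assoc]
        gcongr
        exact integral_comp_fst_compProd_le hdef hnonneg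

theorem integrable_flux_of_linear_growth [IsFiniteMeasure π] [IsFiniteKernel κ] {M : ℝ} {v : V → ℝ}
    (hdb : (π ⊗ₘ κ).map Prod.swap = π ⊗ₘ κ)
    (hGmeas : Measurable fun p : (V × V) × ℝ × ℝ ↦ G p.1.1 p.1.2 p.2.1 p.2.2)
    (hGbound : ∀ x y a b, |G x y a b| ≤ M * (1 + |a| + |b|))
    (hv : Measurable v) (hvi : Integrable v π) :
    Integrable (fun p : V × V ↦ G p.1 p.2 (v p.1) (v p.2)) (π ⊗ₘ κ) := by
  have hfst : Integrable (fun p : V × V ↦ v p.1) (π ⊗ₘ κ) := integrable_comp_fst_compProd hvi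
  have hswap : MeasurePreserving Prod.swap (π ⊗ₘ κ) (π ⊗ₘ κ) := ⟨measurable_swap, hdb⟩
  have hsnd : Integrable (fun p : V × V ↦ v p.2) (π ⊗ₘ κ) :=
    hswap.integrable_comp_of_integrable hfst
  have hmeas : Measurable fun p : V × V ↦ G p.1 p.2 (v p.1) (v p.2) :=
    hGmeas.comp (measurable_id.prodMk
      ((hv.comp measurable_fst).prodMk (hv.comp measurable_snd)))
  exact ((((integrable_const 1).add hfst.abs).add hsnd.abs).const_mul M).mono'
    hmeas.aestronglyMeasurable (Eventually.of_forall fun p ↦ hGbound _ _ _ _)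

theorem measurable_drift [IsSFiniteKernel κ] {ι : Type*} [MeasurableSpace ι] {u : ι → V → ℝ}
    (hGmeas : Measurable fun p : (V × V) × ℝ × ℝ ↦ G p.1.1 p.1.2 p.2.1 p.2.2)
    (hu : Measurable fun p : ι × V ↦ u p.1 p.2) :
    Measurable fun p : ι × V ↦ drift κ G (u p.1) p.2 := by
  have hself : Measurable fun q : (ι × V) × V ↦ u q.1.1 q.1.2 := hu.comp measurable_fst
  have hother : Measurable fun q : (ι × V) × V ↦ u q.1.1 q.2 :=
    hu.comp ((measurable_fst.comp measurable_fst).prodMk measurable_snd)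
  have hG : Measurable fun q : (ι × V) × V ↦ G q.1.2 q.2 (u q.1.1 q.1.2) (u q.1.1 q.2) :=
    hGmeas.comp (((measurable_snd.comp measurable_fst).prodMk measurable_snd).prodMk
      (hself.prodMk hother))
  exact (hG.stronglyMeasurable.integral_kernel_prod_right'
    (κ := κ.comap Prod.snd measurable_snd)).measurable

end Drift

namespace IsPointwiseSolution

variable {V : Type*} [MeasurableSpace V] {π : Measure V} {κ : Kernel V V}
  {G : V → V → ℝ → ℝ → ℝ} {u : ℝ → V → ℝ}

theorem measurable_apply (hu : IsPointwiseSolution π κ G u) (t : ℝ) : Measurable (u t) :=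
  hu.1.comp measurable_prodMk_left

theorem integrable (hu : IsPointwiseSolution π κ G u) {t : ℝ} (ht : 0 ≤ t) :
    Integrable (u t) π :=
  hu.2.1 t ht

theorem ae_eq_add_integral_drift (hu : IsPointwiseSolution π κ G u) :
    ∀ᵐ x ∂π, ∀ t, 0 ≤ t → u t x = u 0 x + ∫ s in (0 : ℝ)..t, drift κ G (u s) x := by
  filter_upwards [hu.2.2.2] with x hx t ht
  rw [intervalIntegral.integral_of_le ht]
  exact hx t ht

theorem neg (hu : IsPointwiseSolution π κ G u) :
    IsPointwiseSolution π κ (negConj G) fun t ↦ -u t := by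
  obtain ⟨hmeas, hint, hfin, hsol⟩ := hu
  refine ⟨hmeas.neg, fun t ht ↦ (hint t ht).neg, fun T hT ↦ ?_, ?_⟩
  · simpa only [negConj, Pi.neg_apply, neg_neg, integral_neg, abs_neg] using hfin T hT
  · filter_upwards [hsol] with x hx t ht
    simp only [negConj, Pi.neg_apply, neg_neg, integral_neg, hx t ht, neg_add]

theorem setIntegral_drift_eq_integral_indicator (hu : IsPointwiseSolution π κ G u) (c s : ℝ) :
    ∫ x in {x | u s x < c}, drift κ G (u s) x ∂π =
      ∫ x, {x | u s x < c}.indicator (drift κ G (u s)) x ∂π :=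
  (integral_indicator (measurableSet_lt (hu.measurable_apply s) measurable_const)).symm

section SFinite

variable [SFinite π] [IsSFiniteKernel κ]

theorem integrable_drift (hu : IsPointwiseSolution π κ G u)
    (hGmeas : Measurable fun p : (V × V) × ℝ × ℝ ↦ G p.1.1 p.1.2 p.2.1 p.2.2) (T : ℝ) :
    Integrable (fun p : ℝ × V ↦ drift κ G (u p.1) p.2) ((volume.restrict (Ioc 0 T)).prod π) := by
  rcases le_or_gt T 0 with hT | hT
  · simp [Ioc_eq_empty_of_le hT]
  · have hmeas := measurable_drift (κ := κ) hGmeas hu.1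
    refine ⟨hmeas.aestronglyMeasurable, ?_⟩
    rw [hasFiniteIntegral_iff_norm, lintegral_prod _ hmeas.norm.ennreal_ofReal.aemeasurable]
    exact hu.2.2.1 T hT

theorem integrable_indicator_drift (hu : IsPointwiseSolution π κ G u)
    (hGmeas : Measurable fun p : (V × V) × ℝ × ℝ ↦ G p.1.1 p.1.2 p.2.1 p.2.2) (c T : ℝ) :
    Integrable (fun p : ℝ × V ↦ {x | u p.1 x < c}.indicator (drift κ G (u p.1)) p.2)
      ((volume.restrict (Ioc 0 T)).prod π) :=
  (hu.integrable_drift hGmeas T).indicator (measurableSet_lt hu.1 measurable_const)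

theorem intervalIntegrable_setIntegral_drift (hu : IsPointwiseSolution π κ G u)
    (hGmeas : Measurable fun p : (V × V) × ℝ × ℝ ↦ G p.1.1 p.1.2 p.2.1 p.2.2) (c : ℝ) {T : ℝ}
    (hT : 0 ≤ T) :
    IntervalIntegrable (fun s ↦ ∫ x in {x | u s x < c}, drift κ G (u s) x ∂π) volume 0 T := by
  simp only [hu.setIntegral_drift_eq_integral_indicator]
  rw [intervalIntegrable_iff_integrableOn_Ioc_of_le hT]
  exact (hu.integrable_indicator_drift hGmeas c T).integral_prod_left

theorem integral_deficit_eq (hu : IsPointwiseSolution π κ G u)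
    (hGmeas : Measurable fun p : (V × V) × ℝ × ℝ ↦ G p.1.1 p.1.2 p.2.1 p.2.2) {c : ℝ}
    (hu0 : ∀ᵐ x ∂π, c ≤ u 0 x) {t : ℝ} (ht : 0 ≤ t) :
    ∫ x, max (c - u t x) 0 ∂π =
      ∫ s in (0 : ℝ)..t, -∫ x in {x | u s x < c}, drift κ G (u s) x ∂π := by
  have hpoint : ∀ᵐ x ∂π, max (c - u t x) 0 =
      -∫ s in Ioc 0 t, {x | u s x < c}.indicator (drift κ G (u s)) x := by
    filter_upwards [hu.ae_eq_add_integral_drift, hu0,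
      (hu.integrable_drift hGmeas t).prod_left_ae] with x hx hx0 hint
    have hchain := integral_indicator_lt_eq_of_eq_add_integral ht
      ((intervalIntegrable_iff_integrableOn_Ioc_of_le ht).2 hint) (fun s hs ↦ hx s hs.1) c
    rw [max_eq_right (sub_nonpos.2 hx0), zero_sub, intervalIntegral.integral_of_le ht] at hchain
    exact neg_eq_iff_eq_neg.1 hchain.symm
  rw [integral_congr_ae hpoint, integral_neg, intervalIntegral.integral_neg,
    intervalIntegral.integral_of_le ht]
  simp only [hu.setIntegral_drift_eq_integral_indicator]
  exact congrArg Neg.neg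
    (integral_integral_swap (hu.integrable_indicator_drift hGmeas c t)).symm

end SFinite

section FiniteMeasure

variable [IsFiniteMeasure π] {ℓ c : ℝ}

theorem integrable_deficit (hu : IsPointwiseSolution π κ G u) {t : ℝ} (ht : 0 ≤ t) :
    Integrable (fun x ↦ max (c - u t x) 0) π :=
  ((integrable_const c).sub (hu.integrable ht)).pos_part

variable [IsFiniteKernel κ]

theorem integral_deficit_nonpos (hu : IsPointwiseSolution π κ G u)
    (hdb : (π ⊗ₘ κ).map Prod.swap = π ⊗ₘ κ)
    (hGmeas : Measurable fun p : (V × V) × ℝ × ℝ ↦ G p.1.1 p.1.2 p.2.1 p.2.2)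
    (hskew : ∀ x y a b, G x y a b = -G y x b a)
    (hint : ∀ t, 0 ≤ t → Integrable (fun p : V × V ↦ G p.1 p.2 (u t p.1) (u t p.2)) (π ⊗ₘ κ))
    (hℓ : 0 ≤ ℓ) (hc : IsLowerBarrier G ℓ c) (hu0 : ∀ᵐ x ∂π, c ≤ u 0 x)
    {T : ℝ} (hT : 0 ≤ T) :
    ∫ x, max (c - u T x) 0 ∂π ≤ 0 := by
  set φ : ℝ → ℝ := fun t ↦ ∫ x, max (c - u t x) 0 ∂π
  set ψ : ℝ → ℝ := fun s ↦ -∫ x in {x | u s x < c}, drift κ G (u s) x ∂π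
  have hφψ : ∀ t ∈ Icc 0 T, φ t = ∫ s in (0 : ℝ)..t, ψ s := fun t ht ↦
    hu.integral_deficit_eq hGmeas hu0 ht.1
  have hψ {t : ℝ} (ht : 0 ≤ t) : IntervalIntegrable ψ volume 0 t :=
    (hu.intervalIntegrable_setIntegral_drift hGmeas c ht).neg
  have hφ : ContinuousOn φ (Icc 0 T) := by
    have hprim := intervalIntegral.continuousOn_primitive_interval' (hψ hT) left_mem_uIcc
    rw [uIcc_of_le hT] at hprim
    exact hprim.congr hφψ
  have hψφ (t : ℝ) (ht : 0 ≤ t) : ψ t ≤ ℓ * κ.bound.toReal * φ t :=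
    neg_setIntegral_drift_le_integral_deficit hdb hskew hℓ hc (hu.measurable_apply t)
      (hu.integrable_deficit ht) (hint t ht)
  refine nonpos_of_le_const_mul_integral (mul_nonneg hℓ κ.bound.toReal_nonneg) hφ
    (fun t ht ↦ ?_) (right_mem_Icc.2 hT)
  have hφint : IntervalIntegrable φ volume 0 t :=
    (hφ.mono (Icc_subset_Icc_right ht.2)).intervalIntegrable_of_Icc ht.1
  rw [hφψ t ht, ← intervalIntegral.integral_const_mul]
  exact intervalIntegral.integral_mono_on ht.1 (hψ ht.1) (hφint.const_mul _)
    fun s hs ↦ hψφ s hs.1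

theorem ae_const_le_of_isLowerBarrier (hu : IsPointwiseSolution π κ G u)
    (hdb : (π ⊗ₘ κ).map Prod.swap = π ⊗ₘ κ)
    (hGmeas : Measurable fun p : (V × V) × ℝ × ℝ ↦ G p.1.1 p.1.2 p.2.1 p.2.2)
    (hskew : ∀ x y a b, G x y a b = -G y x b a)
    (hint : ∀ t, 0 ≤ t → Integrable (fun p : V × V ↦ G p.1 p.2 (u t p.1) (u t p.2)) (π ⊗ₘ κ))
    (hℓ : 0 ≤ ℓ) (hc : IsLowerBarrier G ℓ c) (hu0 : ∀ᵐ x ∂π, c ≤ u 0 x)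
    {t : ℝ} (ht : 0 ≤ t) :
    ∀ᵐ x ∂π, c ≤ u t x := by
  have hnonneg : 0 ≤ fun x ↦ max (c - u t x) 0 := fun _ ↦ le_max_right _ _
  have hzero := (hu.integral_deficit_nonpos hdb hGmeas hskew hint hℓ hc hu0 ht).antisymm
    (integral_nonneg hnonneg)
  rw [integral_eq_zero_iff_of_nonneg hnonneg (hu.integrable_deficit ht)] at hzero
  filter_upwards [hzero] with x hx
  exact sub_nonpos.1 (max_eq_right_iff.1 hx)

theorem ae_le_const_of_isUpperBarrier (hu : IsPointwiseSolution π κ G u)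
    (hdb : (π ⊗ₘ κ).map Prod.swap = π ⊗ₘ κ)
    (hGmeas : Measurable fun p : (V × V) × ℝ × ℝ ↦ G p.1.1 p.1.2 p.2.1 p.2.2)
    (hskew : ∀ x y a b, G x y a b = -G y x b a)
    (hint : ∀ t, 0 ≤ t → Integrable (fun p : V × V ↦ G p.1 p.2 (u t p.1) (u t p.2)) (π ⊗ₘ κ))
    (hℓ : 0 ≤ ℓ) (hc : IsUpperBarrier G ℓ c) (hu0 : ∀ᵐ x ∂π, u 0 x ≤ c)
    {t : ℝ} (ht : 0 ≤ t) :
    ∀ᵐ x ∂π, u t x ≤ c := by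
  have hmeas : Measurable fun p : (V × V) × ℝ × ℝ ↦
      negConj G p.1.1 p.1.2 p.2.1 p.2.2 := by
    have hneg : Measurable fun p : (V × V) × ℝ × ℝ ↦ (p.1, (-p.2.1, -p.2.2)) := by fun_prop
    exact (hGmeas.comp hneg).neg
  have hge := hu.neg.ae_const_le_of_isLowerBarrier hdb hmeas
    (fun x y a b ↦ congrArg Neg.neg (hskew x y (-a) (-b)))
    (fun t ht ↦ by simpa only [negConj, Pi.neg_apply, neg_neg] using (hint t ht).fun_neg)
    hℓ hc.isLowerBarrier_negConj (hu0.mono fun _ ↦ neg_le_neg) ht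
  exact hge.mono fun _ ↦ neg_le_neg_iff.1

end FiniteMeasure

end IsPointwiseSolution

theorem comparison_principles_general
    {V : Type*} [MeasurableSpace V]
    (π : Measure V) [IsFiniteMeasure π]
    (κ : Kernel V V) [IsFiniteKernel κ]
    (hdb : (π ⊗ₘ κ).map Prod.swap = π ⊗ₘ κ)
    (G : V → V → ℝ → ℝ → ℝ)
    (hGmeas : Measurable fun p : (V × V) × ℝ × ℝ ↦ G p.1.1 p.1.2 p.2.1 p.2.2)
    (hGskew : ∀ x y a b, G x y a b = -G y x b a)
    (ℓ : ℝ) (hℓ : 0 ≤ ℓ)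
    (u : ℝ → V → ℝ)
    (hu : IsPointwiseSolution π κ G u)
    (hint : ∀ t, 0 ≤ t →
      Integrable (fun p : V × V ↦ G p.1 p.2 (u t p.1) (u t p.2)) (π ⊗ₘ κ)) :
    (∀ c, IsLowerBarrier G ℓ c → (∀ᵐ x ∂π, c ≤ u 0 x) →
      ∀ t, 0 ≤ t → ∀ᵐ x ∂π, c ≤ u t x) ∧
    (∀ c, IsUpperBarrier G ℓ c → (∀ᵐ x ∂π, u 0 x ≤ c) →
      ∀ t, 0 ≤ t → ∀ᵐ x ∂π, u t x ≤ c) :=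
  ⟨fun _ hc hu0 _ ↦ hu.ae_const_le_of_isLowerBarrier hdb hGmeas hGskew hint hℓ hc hu0,
    fun _ hc hu0 _ ↦ hu.ae_le_const_of_isUpperBarrier hdb hGmeas hGskew hint hℓ hc hu0⟩

/-- Comparison principles: values `ū` that are sub/super-equilibria of `G` are
propagated as a.e. lower/upper bounds of the solution. -/
theorem comparison_principles
    {V : Type*} [MeasurableSpace V]
    (π : Measure V) [IsFiniteMeasure π]
    (κ : Kernel V V) [IsFiniteKernel κ]
    (hdb : (π ⊗ₘ κ).map Prod.swap = π ⊗ₘ κ)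
    (M : ℝ) (hM : 0 < M)
    (G : V → V → ℝ → ℝ → ℝ)
    (hGmeas : Measurable fun p : (V × V) × ℝ × ℝ => G p.1.1 p.1.2 p.2.1 p.2.2)
    (hGcont : ∀ x y : V, Continuous fun q : ℝ × ℝ => G x y q.1 q.2)
    (hGbound : ∀ (x y : V) (a b : ℝ), |G x y a b| ≤ M * (1 + |a| + |b|))
    (hGskew : ∀ (x y : V) (a b : ℝ), G x y a b = - G y x b a)
    (ℓ : ℝ) (hℓ : 0 ≤ ℓ)
    (hGdiss : ∀ (x y : V) (a a' b : ℝ), a ≤ a' →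
      G x y a' b - G x y a b ≤ ℓ * (a' - a))
    (u : ℝ → V → ℝ)
    (hu : IsPointwiseSolution π κ G u) :
    (∀ ubar : ℝ,
      (∀ x y : V, G x y ubar ubar = 0) →
      (∀ (x y : V) (v : ℝ), ubar ≤ v → 0 ≤ G x y ubar v) →
      (∀ᵐ x ∂π, ubar ≤ u 0 x) →
      ∀ t : ℝ, 0 ≤ t → ∀ᵐ x ∂π, ubar ≤ u t x) ∧
    (∀ ubar : ℝ,
      (∀ x y : V, G x y ubar ubar = 0) →
      (∀ (x y : V) (v : ℝ), v ≤ ubar → G x y ubar v ≤ 0) →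
      (∀ᵐ x ∂π, u 0 x ≤ ubar) →
      ∀ t : ℝ, 0 ≤ t → ∀ᵐ x ∂π, u t x ≤ ubar) := by
  have hgen := comparison_principles_general π κ hdb G hGmeas hGskew ℓ hℓ u hu fun t ht ↦
    integrable_flux_of_linear_growth hdb hGmeas hGbound (hu.measurable_apply t) (hu.integrable ht)
  exact ⟨fun c _ hc ↦ hgen.1 c (isLowerBarrier_of_dissipative hGdiss hc),
    fun c _ hc ↦ hgen.2 c (isUpperBarrier_of_dissipative hGdiss hc)⟩
end
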